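/- Strebel normal form, higher-order pole case (case ord₀ω = −m < −1 of Theorem 4.1). Let δ > 0, let m ≥ 2 be an integer, and let u : Δ_δ → ℂ be holomorphic with u(0) ≠ 0. Set f(z) = u(z)/z^m for z ∈ Δ_δ∖{0}, and let r be the (m−1)-st Taylor coefficient of u at 0 (i.e. r = u^{(m−1)}(0)/(m−1)!, the residue of f at 0). Then there exist ε > 0 and an injective holomorphic map φ : Δ_ε → Δ_δ with φ(0) = 0 such that f(φ(z)) · φ′(z) = z^{−m} + r·z^{−1} for all z ∈ Δ_ε∖{0}. (This expresses that φ pulls back the meromorphic differential ω = f(z) dz to the standard form (z^{−m+1} + r) dz/z.) -/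

import Mathlib

/-!
With `k = m - 1`, the differential `u z / z ^ (k + 1) dz` with residue `r` has the multivalued
primitive `g z / z ^ k + r log z`, where `g` is holomorphic and `g 0 = -u 0 / k`; the normal form
has the primitive `-1 / (k z ^ k) + r log z`.  Looking for `φ` in the form `φ z = z exp (H z)`
makes the logarithms cancel up to the holomorphic term `r H`, so that equating the primitives
amounts to `exp (-k H) g (z exp H) + r z ^ k H = -1 / k`.  This equation is regular at `z = 0`,
where it says `exp (k H 0) = u 0`, and its derivative in `H` does not vanish there, so the implicit
function theorem provides `H`.
-/

open Filter Topology Complex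

theorem exists_analyticAt_primitive {E : Type*} [NormedAddCommGroup E] [NormedSpace ℂ E]
    [CompleteSpace E] {f : ℂ → E} {c : ℂ} (hf : AnalyticAt ℂ f c) :
    ∃ F : ℂ → E, AnalyticAt ℂ F c ∧ ∀ᶠ z in 𝓝 c, HasDerivAt F (f z) z := by
  obtain ⟨ρ, hρ, hball⟩ := Metric.eventually_nhds_iff_ball.1 hf.eventually_analyticAt
  have hdiff : DifferentiableOn ℂ f (Metric.ball c ρ) := fun z hz ↦
    (hball z hz).differentiableAt.differentiableWithinAt
  obtain ⟨F, hF⟩ := hdiff.isExactOn_ball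
  have hF_ev : ∀ᶠ z in 𝓝 c, HasDerivAt F (f z) z :=
    eventually_of_mem (Metric.ball_mem_nhds c hρ) hF
  exact ⟨F, analyticAt_iff_eventually_differentiableAt.2
    (hF_ev.mono fun _ h ↦ h.differentiableAt), hF_ev⟩

theorem hasDerivAt_pow_div_pow {𝕜 : Type*} [NontriviallyNormedField 𝕜] (i k : ℕ) {z : 𝕜}
    (hz : z ≠ 0) :
    HasDerivAt (fun z ↦ z ^ i / z ^ k) (((i : 𝕜) - k) * z ^ i / z ^ (k + 1)) z := by
  have hzpow := hasDerivAt_zpow ((i : ℤ) - k) z (Or.inl hz)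
  have hderiv : (((i : ℤ) - k : ℤ) : 𝕜) * z ^ ((i : ℤ) - k - 1) =
      ((i : 𝕜) - k) * z ^ i / z ^ (k + 1) := by
    rw [sub_sub, zpow_sub₀ hz, mul_div_assoc]
    norm_cast
  rw [hderiv] at hzpow
  refine hzpow.congr_of_eventuallyEq ((eventually_ne_nhds hz).mono fun y hy ↦ ?_)
  simp only [zpow_sub₀ hy, zpow_natCast]

theorem hasDerivAt_sum_range_div_mul_pow_div_pow {𝕜 : Type*} [NontriviallyNormedField 𝕜]
    [CharZero 𝕜] (a : ℕ → 𝕜) (k : ℕ) {z : 𝕜} (hz : z ≠ 0) :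
    HasDerivAt (fun z ↦ ∑ i ∈ Finset.range k, a i / (i - k) * (z ^ i / z ^ k))
      ((∑ i ∈ Finset.range k, a i * z ^ i) / z ^ (k + 1)) z := by
  rw [Finset.sum_div]
  refine HasDerivAt.fun_sum fun i hi ↦
    ((hasDerivAt_pow_div_pow i k hz).const_mul _).congr_deriv ?_
  have hik : (i : 𝕜) - k ≠ 0 := sub_ne_zero.2 (mod_cast (Finset.mem_range.1 hi).ne)
  field_simp

theorem exists_analyticAt_div_pow_primitive {u : ℂ → ℂ} (hu : AnalyticAt ℂ u 0) {k : ℕ}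
    (hk : k ≠ 0) :
    ∃ g : ℂ → ℂ, AnalyticAt ℂ g 0 ∧ g 0 = -(u 0 / k) ∧ ∀ᶠ z in 𝓝[≠] 0,
      HasDerivAt (fun z ↦ g z / z ^ k)
        (u z / z ^ (k + 1) - iteratedDeriv k u 0 / (k.factorial : ℂ) / z) z := by
  obtain ⟨w, hw, hu_taylor⟩ := hu.exists_eventuallyEq_sum_add_pow_mul (k + 1)
  obtain ⟨W, hW, hW_deriv⟩ := exists_analyticAt_primitive hw
  let a : ℕ → ℂ := fun i ↦ iteratedDeriv i u 0 / (i.factorial : ℂ)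
  let g : ℂ → ℂ := fun z ↦ ∑ i ∈ Finset.range k, a i / (i - k) * z ^ i + z ^ k * W z
  have hg_zero : g 0 = -(u 0 / k) := by
    have hk' : 0 ∈ Finset.range k := Finset.mem_range.2 (Nat.pos_of_ne_zero hk)
    simp only [g]
    rw [Finset.sum_eq_single_of_mem 0 hk' fun i _ hi ↦ by rw [zero_pow hi, mul_zero]]
    simp [a, hk, div_neg]
  refine ⟨g, ?_, hg_zero, ?_⟩
  · exact (Finset.analyticAt_fun_sum _ fun i _ ↦ by fun_prop).add (by fun_prop)
  filter_upwards [hu_taylor.filter_mono nhdsWithin_le_nhds, hW_deriv.filter_mono nhdsWithin_le_nhds,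
    self_mem_nhdsWithin] with z hz_taylor hWz (hz : z ≠ 0)
  have hg_div : (fun y ↦ g y / y ^ k) =ᶠ[𝓝 z]
      fun y ↦ ∑ i ∈ Finset.range k, a i / (i - k) * (y ^ i / y ^ k) + W y := by
    filter_upwards [eventually_ne_nhds hz] with y hy
    simp only [g, add_div, Finset.sum_div, mul_div_assoc,
      mul_div_cancel_left₀ _ (pow_ne_zero k hy)]
  have hu_z : u z = ∑ i ∈ Finset.range k, a i * z ^ i + a k * z ^ k + z ^ (k + 1) * w z := by
    rw [hz_taylor, ← Finset.sum_range_succ]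
    simp only [a, smul_eq_mul, div_mul_eq_mul_div, mul_div_assoc', mul_comm]
  refine (((hasDerivAt_sum_range_div_mul_pow_div_pow a k hz).add hWz).congr_of_eventuallyEq
    hg_div).congr_deriv ?_
  rw [hu_z]
  change _ = _ - a k / z
  field_simp
  ring

theorem exists_analyticAt_implicit {𝕜 E : Type*} [RCLike 𝕜] [NormedAddCommGroup E]
    [NormedSpace 𝕜 E] [CompleteSpace E] {G : E × 𝕜 → 𝕜} {x₀ : E} {y₀ d : 𝕜}
    (hG : AnalyticAt 𝕜 G (x₀, y₀)) (hd : d ≠ 0) (hGd : HasDerivAt (fun y ↦ G (x₀, y)) d y₀) :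
    ∃ h : E → 𝕜, AnalyticAt 𝕜 h x₀ ∧ h x₀ = y₀ ∧ ∀ᶠ x in 𝓝 x₀, G (x, h x) = G (x₀, y₀) := by
  have hG_smooth : ContDiffAt 𝕜 ⊤ G (x₀, y₀) := hG.contDiffAt
  have hpartial : HasFDerivAt (fun y ↦ G (x₀, y)) (fderiv 𝕜 G (x₀, y₀) ∘L .inr 𝕜 E 𝕜) y₀ :=
    hG.differentiableAt.hasFDerivAt.comp y₀ (hasFDerivAt_prodMk_right x₀ y₀)
  have hinv : (fderiv 𝕜 G (x₀, y₀) ∘L .inr 𝕜 E 𝕜).IsInvertible := by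
    refine ⟨ContinuousLinearEquiv.unitsEquivAut 𝕜 (Units.mk0 d hd), ?_⟩
    rw [hpartial.unique hGd.hasFDerivAt]
    ext
    simp
  exact ⟨hG_smooth.implicitFunction (by simp) hinv,
    (hG_smooth.contDiffAt_implicitFunction (by simp) hinv).analyticAt,
    hG_smooth.implicitFunction_apply_self (by simp) hinv,
    hG_smooth.eventually_apply_implicitFunction (by simp) hinv⟩

theorem exists_analyticAt_exp_mul_add_eq {g : ℂ → ℂ} (hg : AnalyticAt ℂ g 0) (hg0 : g 0 ≠ 0)
    {k : ℕ} (hk : k ≠ 0) (r w₀ : ℂ) :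
    ∃ H : ℂ → ℂ, AnalyticAt ℂ H 0 ∧ H 0 = w₀ ∧ ∀ᶠ z in 𝓝 0,
      exp (-(k * H z)) * g (z * exp (H z)) + r * z ^ k * H z = exp (-(k * w₀)) * g 0 := by
  let G : ℂ × ℂ → ℂ := fun p ↦ exp (-(k * p.2)) * g (p.1 * exp p.2) + r * p.1 ^ k * p.2
  have hG : AnalyticAt ℂ G (0, w₀) := by
    have hfst : AnalyticAt ℂ (fun p : ℂ × ℂ ↦ p.1) (0, w₀) := analyticAt_fst
    have hsnd : AnalyticAt ℂ (fun p : ℂ × ℂ ↦ p.2) (0, w₀) := analyticAt_snd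
    have hcomp : AnalyticAt ℂ (fun p : ℂ × ℂ ↦ g (p.1 * exp p.2)) (0, w₀) :=
      AnalyticAt.fun_comp (by simpa using hg) (hfst.mul hsnd.cexp)
    exact ((analyticAt_const.mul hsnd).neg.cexp.mul hcomp).add
      ((analyticAt_const.mul (hfst.pow k)).mul hsnd)
  have hG_zero (w : ℂ) : G (0, w) = exp (-(k * w)) * g 0 := by simp [G, hk]
  have hGd : HasDerivAt (fun w ↦ G (0, w)) (exp (-(k * w₀)) * -(k * 1) * g 0) w₀ := by
    simp only [hG_zero]
    exact ((hasDerivAt_id w₀).const_mul (k : ℂ)).neg.cexp.mul_const (g 0)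
  have hd : exp (-(k * w₀)) * -(k * 1) * g 0 ≠ 0 := by simp [hk, hg0, exp_ne_zero]
  simpa only [hG_zero] using exists_analyticAt_implicit hG hd hGd

theorem hasDerivAt_mul_exp {H : ℂ → ℂ} {H' z : ℂ} (hH : HasDerivAt H H' z) :
    HasDerivAt (fun z ↦ z * exp (H z)) (exp (H z) * (1 + z * H')) z :=
  ((hasDerivAt_id z).mul hH.cexp).congr_deriv (by simp only [id_eq]; ring)

theorem tendsto_mul_exp_nhdsNE_zero {H : ℂ → ℂ} (hH : ContinuousAt H 0) :
    Tendsto (fun z ↦ z * exp (H z)) (𝓝[≠] 0) (𝓝[≠] 0) := by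
  have hφ : ContinuousAt (fun z ↦ z * exp (H z)) 0 := by fun_prop
  refine tendsto_nhdsWithin_iff.2 ⟨?_, ?_⟩
  · simpa using hφ.tendsto.mono_left nhdsWithin_le_nhds
  · filter_upwards [self_mem_nhdsWithin] with z hz using mul_ne_zero hz (exp_ne_zero _)

theorem pullback_mul_exp_eq_of_primitive_eq {f Q P H : ℂ → ℂ} {p r z : ℂ} (hz : z ≠ 0)
    (hQ : HasDerivAt Q (f (z * exp (H z)) - r / (z * exp (H z))) (z * exp (H z)))
    (hH : DifferentiableAt ℂ H z) (hP : HasDerivAt P p z)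
    (heq : ∀ᶠ y in 𝓝 z, Q (y * exp (H y)) + r * H y = P y) :
    f (z * exp (H z)) * deriv (fun y ↦ y * exp (H y)) z = p + r * z⁻¹ := by
  have hφ := hasDerivAt_mul_exp hH.hasDerivAt
  have hderiv := ((hQ.comp z hφ).add (hH.hasDerivAt.const_mul r)).unique
    (hP.congr_of_eventuallyEq heq)
  have hlog : r / (z * exp (H z)) * (exp (H z) * (1 + z * deriv H z)) =
      r * z⁻¹ + r * deriv H z := by
    field_simp [exp_ne_zero (H z)]
  rw [hφ.deriv]
  linear_combination hderiv + hlog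

theorem exists_analyticAt_pullback_eq_normalForm {u : ℂ → ℂ} (hu : AnalyticAt ℂ u 0)
    (hu0 : u 0 ≠ 0) {k : ℕ} (hk : k ≠ 0) :
    ∃ φ : ℂ → ℂ, AnalyticAt ℂ φ 0 ∧ φ 0 = 0 ∧ deriv φ 0 ≠ 0 ∧ ∀ᶠ z in 𝓝[≠] 0,
      u (φ z) / φ z ^ (k + 1) * deriv φ z =
        (z ^ (k + 1))⁻¹ + iteratedDeriv k u 0 / (k.factorial : ℂ) * z⁻¹ := by
  have hkC : (k : ℂ) ≠ 0 := Nat.cast_ne_zero.2 hk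
  set r := iteratedDeriv k u 0 / (k.factorial : ℂ)
  obtain ⟨g, hg, hg_zero, hQ⟩ := exists_analyticAt_div_pow_primitive hu hk
  have hg0 : g 0 ≠ 0 := hg_zero ▸ neg_ne_zero.2 (div_ne_zero hu0 hkC)
  obtain ⟨H, hH, -, hHeq⟩ := exists_analyticAt_exp_mul_add_eq hg hg0 hk r (log (u 0) / k)
  have hconst : exp (-(k * (log (u 0) / k))) * g 0 = -(k : ℂ)⁻¹ := by
    rw [mul_div_cancel₀ _ hkC, exp_neg, exp_log hu0, hg_zero]
    field_simp
  rw [hconst] at hHeq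
  refine ⟨fun z ↦ z * exp (H z), by fun_prop, zero_mul _, ?_, ?_⟩
  · simp [(hasDerivAt_mul_exp hH.differentiableAt.hasDerivAt).deriv, exp_ne_zero]
  filter_upwards [self_mem_nhdsWithin,
    (tendsto_mul_exp_nhdsNE_zero hH.continuousAt).eventually hQ,
    hH.eventually_analyticAt.filter_mono nhdsWithin_le_nhds,
    hHeq.eventually_nhds.filter_mono nhdsWithin_le_nhds] with z (hz : z ≠ 0) hQz hHz hHeqz
  have hP : HasDerivAt (fun y : ℂ ↦ -(k : ℂ)⁻¹ * (y ^ 0 / y ^ k)) (z ^ (k + 1))⁻¹ z :=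
    ((hasDerivAt_pow_div_pow 0 k hz).const_mul _).congr_deriv (by simp [field])
  refine pullback_mul_exp_eq_of_primitive_eq (f := fun z ↦ u z / z ^ (k + 1)) hz hQz
    hHz.differentiableAt hP ?_
  filter_upwards [hHeqz, eventually_ne_nhds hz] with y hy hy0
  rw [mul_pow, ← exp_nat_mul]
  rw [exp_neg] at hy
  have hexp := exp_ne_zero (k * H y)
  field_simp at hy ⊢
  linear_combination hy

/-- **Strebel normal form, higher-order pole case** (case `ord₀ ω = −m < −1` of
Theorem 4.1).  Let `δ > 0`, `m ≥ 2`, and `u : Δ_δ → ℂ` holomorphic with `u 0 ≠ 0`.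
Set `f z = u z / z^m` for `z ≠ 0`, and let `r = u^{(m−1)}(0)/(m−1)!` be the
`(m−1)`-st Taylor coefficient of `u` at `0` (the residue of `f` at `0`).  Then there
exist `ε > 0` and an injective holomorphic map `φ : Δ_ε → Δ_δ` with `φ 0 = 0` such
that `f(φ(z)) · φ′(z) = z^{−m} + r z^{−1}` on `Δ_ε ∖ {0}`, i.e. `φ` pulls back the
meromorphic differential `ω = f(z) dz` to the standard form `(z^{−m+1} + r) dz/z`. -/
theorem strebel_normal_form_higher_pole
    (δ : ℝ) (hδ : 0 < δ) (m : ℕ) (hm : 2 ≤ m)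
    (u : ℂ → ℂ) (hu : DifferentiableOn ℂ u (Metric.ball 0 δ)) (hu0 : u 0 ≠ 0)
    (f : ℂ → ℂ) (hf : ∀ z : ℂ, z ≠ 0 → f z = u z / z ^ m)
    (r : ℂ) (hr : r = iteratedDeriv (m - 1) u 0 / (Nat.factorial (m - 1) : ℂ)) :
    ∃ ε : ℝ, 0 < ε ∧ ∃ φ : ℂ → ℂ,
      Set.InjOn φ (Metric.ball 0 ε) ∧
      DifferentiableOn ℂ φ (Metric.ball 0 ε) ∧
      Set.MapsTo φ (Metric.ball 0 ε) (Metric.ball 0 δ) ∧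
      φ 0 = 0 ∧
      ∀ z ∈ Metric.ball (0 : ℂ) ε, z ≠ 0 →
        f (φ z) * deriv φ z = (z ^ m)⁻¹ + r * z⁻¹ := by
  obtain ⟨k, rfl⟩ : ∃ k, m = k + 1 := ⟨m - 1, by omega⟩
  have hua : AnalyticAt ℂ u 0 := hu.analyticAt (Metric.ball_mem_nhds 0 hδ)
  obtain ⟨φ, hφ, hφ0, hφ', hpull⟩ :=
    exists_analyticAt_pullback_eq_normalForm hua hu0 (k := k) (by omega)
  have hinv := hφ.hasStrictDerivAt.eventually_left_inverse hφ'
  have hφδ : ∀ᶠ z in 𝓝 0, φ z ∈ Metric.ball 0 δ :=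
    hφ.continuousAt.eventually_mem (hφ0.symm ▸ Metric.ball_mem_nhds 0 hδ)
  obtain ⟨ε, hε, hball⟩ := Metric.eventually_nhds_iff_ball.1
    (hinv.and (hφ.eventually_analyticAt.and (hφδ.and (eventually_nhdsWithin_iff.1 hpull))))
  have hinj : Set.InjOn φ (Metric.ball 0 ε) :=
    Set.LeftInvOn.injOn fun z hz ↦ (hball z hz).1
  refine ⟨ε, hε, φ, hinj, fun z hz ↦ (hball z hz).2.1.differentiableAt.differentiableWithinAt,
    fun z hz ↦ (hball z hz).2.2.1, hφ0, fun z hz hz0 ↦ ?_⟩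
  have hφz : φ z ≠ 0 := hφ0 ▸ hinj.ne hz (Metric.mem_ball_self hε) hz0
  rw [hf _ hφz, hr]
  exact (hball z hz).2.2.2 hz0
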